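/- For any step of the nonsmooth Newmark scheme with γ = 1/2, the algorithmic energy changes only by the work of the external forces, the damping forces and the contact impulses: H(q_{k+1},v_{k+1},a_{k+1}) − H(q_k,v_k,a_k) − W_ext − W_damp = U_{k+1/2}ᵀ P_{k+1}. -/

import Mathlib

open Matrix

/-!
Write `x_γ = γ x₁ + (1 - γ) x₀` and `Δx = x₁ - x₀`. One step of the scheme says that
`Δv = h a_γ + w` and `Δq = h v_{1/2} + (h² / 2) (2β - γ) Δa`. For symmetric `A`,
`½ x₁ᵀAx₁ - ½ x₀ᵀAx₀ = Δxᵀ A x_γ - (γ - ½) Δxᵀ A Δx`. Test the `γ`-average of the equilibrium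
equations with `Δq`. Up to multiples of `γ - ½`, its elastic part is the increment of the elastic
energy, the component of its inertial part along `Δa` is the increment of the correction
`(h² / 4) (2β - γ) aᵀMa`, and the component along `v_{1/2}` is the increment of the kinetic energy
minus the work `v_{1/2}ᵀ M w` of the contact impulse.
-/

open AffineMap (lineMap lineMap_apply_module)

section Energy

variable {𝕜 ι : Type*} [Field 𝕜] [Fintype ι]

/-- The total mechanical energy `E(q, v)` for mass matrix `M` and stiffness matrix `K`. -/
def mechanicalEnergy (M K : Matrix ι ι 𝕜) (q v : ι → 𝕜) : 𝕜 :=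
  1 / 2 * (v ⬝ᵥ M *ᵥ v) + 1 / 2 * (q ⬝ᵥ K *ᵥ q)

/-- The algorithmic energy `H(q, v, a)`, whose variation over a step of the Newmark scheme with time
step `h` and parameters `β`, `γ` obeys a discrete energy balance. -/
def algorithmicEnergy (h β γ : 𝕜) (M K : Matrix ι ι 𝕜) (q v a : ι → 𝕜) : 𝕜 :=
  mechanicalEnergy M K q v + h ^ 2 / 4 * (2 * β - γ) * (a ⬝ᵥ M *ᵥ a)

end Energy

section LinearAlgebra

theorem lineMap_one_half_eq_smul_add_smul {𝕜 V : Type*} [Field 𝕜] [NeZero (2 : 𝕜)]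
    [AddCommGroup V] [Module 𝕜 V] (x₀ x₁ : V) :
    lineMap x₀ x₁ (1 / 2 : 𝕜) = (1 / 2 : 𝕜) • x₁ + (1 / 2 : 𝕜) • x₀ := by
  rw [lineMap_apply_module, sub_half, add_comm]

variable {ι : Type*} [Fintype ι]

theorem mulVec_lineMap {R κ : Type*} [CommRing R] (A : Matrix κ ι R) (x₀ x₁ : ι → R) (γ : R) :
    A *ᵥ lineMap x₀ x₁ γ = lineMap (A *ᵥ x₀) (A *ᵥ x₁) γ :=
  A.mulVecLin.toAffineMap.apply_lineMap x₀ x₁ γ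

theorem dotProduct_mulVec_comm_of_isSymm {R : Type*} [CommSemiring R] {A : Matrix ι ι R}
    (hA : A.IsSymm) (x y : ι → R) :
    x ⬝ᵥ A *ᵥ y = y ⬝ᵥ A *ᵥ x := by
  rw [← dotProduct_transpose_mulVec, hA.eq]

theorem half_dotProduct_mulVec_self_sub {𝕜 : Type*} [Field 𝕜] [NeZero (2 : 𝕜)]
    {A : Matrix ι ι 𝕜} (hA : A.IsSymm) (γ : 𝕜) (x₀ x₁ : ι → 𝕜) :
    1 / 2 * (x₁ ⬝ᵥ A *ᵥ x₁) - 1 / 2 * (x₀ ⬝ᵥ A *ᵥ x₀) =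
      (x₁ - x₀) ⬝ᵥ A *ᵥ lineMap x₀ x₁ γ - (γ - 1 / 2) * ((x₁ - x₀) ⬝ᵥ A *ᵥ (x₁ - x₀)) := by
  simp only [lineMap_apply_module, mulVec_add, mulVec_sub, mulVec_smul, dotProduct_add,
    dotProduct_sub, dotProduct_smul, sub_dotProduct, smul_eq_mul,
    dotProduct_mulVec_comm_of_isSymm hA x₁ x₀]
  field_simp
  ring

end LinearAlgebra

section Kinematics

theorem newmark_velocity_sub {R V : Type*} [CommRing R] [AddCommGroup V] [Module R V]
    {h γ : R} {v₀ v₁ a₀ a₁ w : V}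
    (hv : v₁ = v₀ + (h * (1 - γ)) • a₀ + (h * γ) • a₁ + w) :
    v₁ - v₀ = h • lineMap a₀ a₁ γ + w := by
  rw [hv, lineMap_apply_module]
  module

theorem newmark_position_sub {𝕜 V : Type*} [Field 𝕜] [NeZero (2 : 𝕜)] [AddCommGroup V]
    [Module 𝕜 V] {h β γ : 𝕜} {q₀ q₁ v₀ v₁ a₀ a₁ w : V}
    (hv : v₁ = v₀ + (h * (1 - γ)) • a₀ + (h * γ) • a₁ + w)
    (hq : q₁ = q₀ + h • v₀ + (h ^ 2 * (1 / 2 - β)) • a₀ + (h ^ 2 * β) • a₁ + (h / 2) • w) :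
    q₁ - q₀ = h • lineMap v₀ v₁ (1 / 2 : 𝕜) + (h ^ 2 / 2 * (2 * β - γ)) • (a₁ - a₀) := by
  rw [hq, lineMap_one_half_eq_smul_add_smul, hv]
  match_scalars <;> field_simp <;> ring

end Kinematics

section Balance

variable {ι κ : Type*} [Fintype ι] [Fintype κ]

theorem equilibrium_lineMap {R : Type*} [CommRing R] {M K C : Matrix ι ι R}
    {q₀ q₁ v₀ v₁ a₀ a₁ F₀ F₁ : ι → R}
    (hF₀ : M *ᵥ a₀ + K *ᵥ q₀ + C *ᵥ v₀ = F₀) (hF₁ : M *ᵥ a₁ + K *ᵥ q₁ + C *ᵥ v₁ = F₁) (γ : R) :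
    M *ᵥ lineMap a₀ a₁ γ + K *ᵥ lineMap q₀ q₁ γ + C *ᵥ lineMap v₀ v₁ γ = lineMap F₀ F₁ γ := by
  subst hF₀ hF₁
  simp only [mulVec_lineMap]
  simp only [lineMap_apply_module, smul_add]
  abel

variable {𝕜 : Type*} [Field 𝕜] [NeZero (2 : 𝕜)]

theorem lineMap_one_half_dotProduct_mulVec (G : Matrix ι κ 𝕜) (P : κ → 𝕜) (v₀ v₁ : ι → 𝕜) :
    lineMap v₀ v₁ (1 / 2 : 𝕜) ⬝ᵥ G *ᵥ P = ((1 / 2 : 𝕜) • (Gᵀ *ᵥ v₀ + Gᵀ *ᵥ v₁)) ⬝ᵥ P := by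
  rw [lineMap_one_half_eq_smul_add_smul, ← smul_add, add_comm v₁, ← dotProduct_transpose_mulVec,
    mulVec_smul, mulVec_add, dotProduct_comm]

theorem algorithmicEnergy_sub {h β γ : 𝕜} {M K : Matrix ι ι 𝕜} (hM : M.IsSymm) (hK : K.IsSymm)
    {q₀ q₁ v₀ v₁ a₀ a₁ w : ι → 𝕜}
    (hv : v₁ = v₀ + (h * (1 - γ)) • a₀ + (h * γ) • a₁ + w)
    (hq : q₁ = q₀ + h • v₀ + (h ^ 2 * (1 / 2 - β)) • a₀ + (h ^ 2 * β) • a₁ + (h / 2) • w) :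
    algorithmicEnergy h β γ M K q₁ v₁ a₁ - algorithmicEnergy h β γ M K q₀ v₀ a₀ =
      (q₁ - q₀) ⬝ᵥ (M *ᵥ lineMap a₀ a₁ γ + K *ᵥ lineMap q₀ q₁ γ)
        + lineMap v₀ v₁ (1 / 2 : 𝕜) ⬝ᵥ M *ᵥ w
        - (γ - 1 / 2) * ((q₁ - q₀) ⬝ᵥ K *ᵥ (q₁ - q₀)
          + h ^ 2 / 2 * (2 * β - γ) * ((a₁ - a₀) ⬝ᵥ M *ᵥ (a₁ - a₀))) := by
  have kinetic : 1 / 2 * (v₁ ⬝ᵥ M *ᵥ v₁) - 1 / 2 * (v₀ ⬝ᵥ M *ᵥ v₀) =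
      h * (lineMap v₀ v₁ (1 / 2 : 𝕜) ⬝ᵥ M *ᵥ lineMap a₀ a₁ γ)
        + lineMap v₀ v₁ (1 / 2 : 𝕜) ⬝ᵥ M *ᵥ w := by
    rw [half_dotProduct_mulVec_self_sub hM (1 / 2), sub_self, zero_mul, sub_zero,
      dotProduct_mulVec_comm_of_isSymm hM, newmark_velocity_sub hv, mulVec_add, mulVec_smul,
      dotProduct_add, dotProduct_smul, smul_eq_mul]
  have inertial : (q₁ - q₀) ⬝ᵥ M *ᵥ lineMap a₀ a₁ γ =
      h * (lineMap v₀ v₁ (1 / 2 : 𝕜) ⬝ᵥ M *ᵥ lineMap a₀ a₁ γ)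
        + h ^ 2 / 2 * (2 * β - γ) * ((a₁ - a₀) ⬝ᵥ M *ᵥ lineMap a₀ a₁ γ) := by
    rw [newmark_position_sub hv hq, add_dotProduct, smul_dotProduct, smul_dotProduct, smul_eq_mul,
      smul_eq_mul]
  have elastic := half_dotProduct_mulVec_self_sub hK γ q₀ q₁
  have correction := half_dotProduct_mulVec_self_sub hM γ a₀ a₁
  have quarter : h ^ 2 / 4 = h ^ 2 / 2 * (1 / 2) := by
    rw [div_mul_div_comm, mul_one, show (2 : 𝕜) * 2 = 4 by norm_num]
  rw [algorithmicEnergy, algorithmicEnergy, mechanicalEnergy, mechanicalEnergy, dotProduct_add,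
    quarter]
  linear_combination kinetic - inertial + elastic + h ^ 2 / 2 * (2 * β - γ) * correction

end Balance

theorem nonsmooth_newmark_gamma_half_general {𝕜 ι κ : Type*} [Field 𝕜] [NeZero (2 : 𝕜)]
    [Fintype ι] [Fintype κ] {h β γ : 𝕜} {M K C : Matrix ι ι 𝕜} {G : Matrix ι κ 𝕜}
    (hM : M.IsSymm) (hK : K.IsSymm) {q₀ q₁ v₀ v₁ a₀ a₁ w F₀ F₁ : ι → 𝕜} {P : κ → 𝕜}
    (hF₀ : M *ᵥ a₀ + K *ᵥ q₀ + C *ᵥ v₀ = F₀) (hF₁ : M *ᵥ a₁ + K *ᵥ q₁ + C *ᵥ v₁ = F₁)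
    (hw : M *ᵥ w = G *ᵥ P)
    (hv : v₁ = v₀ + (h * (1 - γ)) • a₀ + (h * γ) • a₁ + w)
    (hq : q₁ = q₀ + h • v₀ + (h ^ 2 * (1 / 2 - β)) • a₀ + (h ^ 2 * β) • a₁ + (h / 2) • w) :
    algorithmicEnergy h β γ M K q₁ v₁ a₁ - algorithmicEnergy h β γ M K q₀ v₀ a₀
        - (q₁ - q₀) ⬝ᵥ lineMap F₀ F₁ γ
        - (-((q₁ - q₀) ⬝ᵥ C *ᵥ lineMap v₀ v₁ γ)) =
      ((1 / 2 : 𝕜) • (Gᵀ *ᵥ v₀ + Gᵀ *ᵥ v₁)) ⬝ᵥ P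
        - (γ - 1 / 2) * ((q₁ - q₀) ⬝ᵥ K *ᵥ (q₁ - q₀)
          + h ^ 2 / 2 * (2 * β - γ) * ((a₁ - a₀) ⬝ᵥ M *ᵥ (a₁ - a₀))) := by
  rw [algorithmicEnergy_sub hM hK hv hq, ← equilibrium_lineMap hF₀ hF₁, hw,
    lineMap_one_half_dotProduct_mulVec, dotProduct_add _ _ (C *ᵥ _)]
  ring

/-- For `γ = 1/2`, the algorithmic energy of the nonsmooth Newmark scheme changes
only by the works of the external forces, damping forces and contact impulses. -/
theorem nonsmooth_newmark_gamma_half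
    (n m : ℕ) (hn : 1 ≤ n) (hm : 1 ≤ m)
    (h β : ℝ) (hh : 0 < h)
    (M K C : Matrix (Fin n) (Fin n) ℝ) (G : Matrix (Fin n) (Fin m) ℝ)
    (hM : M.PosDef) (hK : K.PosSemidef)
    (qk qk1 vk vk1 ak ak1 w Fk Fk1 : Fin n → ℝ) (P : Fin m → ℝ)
    (hbalk : M.mulVec ak + K.mulVec qk + C.mulVec vk = Fk)
    (hbalk1 : M.mulVec ak1 + K.mulVec qk1 + C.mulVec vk1 = Fk1)
    (hw : M.mulVec w = G.mulVec P)
    (hv : vk1 = vk + (h * (1 - (1/2 : ℝ))) • ak + (h * (1/2 : ℝ)) • ak1 + w)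
    (hq : qk1 = qk + h • vk + (h ^ 2 * (1/2 - β)) • ak + (h ^ 2 * β) • ak1
        + (h / 2) • w) :
    (1/2 * (vk1 ⬝ᵥ M.mulVec vk1) + 1/2 * (qk1 ⬝ᵥ K.mulVec qk1)
        + h ^ 2 / 4 * (2 * β - 1/2) * (ak1 ⬝ᵥ M.mulVec ak1))
      - (1/2 * (vk ⬝ᵥ M.mulVec vk) + 1/2 * (qk ⬝ᵥ K.mulVec qk)
        + h ^ 2 / 4 * (2 * β - 1/2) * (ak ⬝ᵥ M.mulVec ak))
      - (qk1 - qk) ⬝ᵥ ((1/2 : ℝ) • Fk1 + (1/2 : ℝ) • Fk)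
      - (-((qk1 - qk) ⬝ᵥ C.mulVec ((1/2 : ℝ) • vk1 + (1/2 : ℝ) • vk)))
    = ((1/2 : ℝ) • (Gᵀ.mulVec vk + Gᵀ.mulVec vk1)) ⬝ᵥ P := by
  have hMsymm := isHermitian_iff_isSymm.mp hM.isHermitian
  have hKsymm := isHermitian_iff_isSymm.mp hK.isHermitian
  simpa only [algorithmicEnergy, mechanicalEnergy, lineMap_one_half_eq_smul_add_smul, sub_self,
    zero_mul, sub_zero] using
    nonsmooth_newmark_gamma_half_general hMsymm hKsymm hbalk hbalk1 hw hv hq
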